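/- arXiv:2301.03517 — 2 statements merged into one kernel-verified Lean document; each statement's English description precedes it below -/
import Mathlib

section
/- For every n ≥ 1, every random vector X = (X_1,…,X_n) of real random variables and every α ∈ (0,1), the diversification quotient based on VaR satisfies DQ^VaR_α(X) = (1 − F(Σ_{i=1}^n VaR_α(X_i)))/α, where F is the distribution function of the sum S = X_1 + ⋯ + X_n. -/
open MeasureTheory ProbabilityTheory Filter Set

namespace DQ

variable {Ω : Type*} [MeasurableSpace Ω]

/-- An atomless probability measure: every non-null measurable set has a measurable
subset of strictly smaller positive measure. -/
def Atomless (P : Measure Ω) : Prop :=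
  ∀ A : Set Ω, MeasurableSet A → 0 < P A →
    ∃ B, MeasurableSet B ∧ B ⊆ A ∧ 0 < P B ∧ P B < P A

/-- Value-at-Risk at level `α` (small-`α` convention):
`VaR_α(X) = inf {x | P(X ≤ x) ≥ 1 - α}`. -/
noncomputable def VaR (P : Measure Ω) (α : ℝ) (X : Ω → ℝ) : ℝ :=
  sInf {x : ℝ | 1 - α ≤ (P {ω | X ω ≤ x}).toReal}

/-- Expected Shortfall at level `α`: `ES_α(X) = (1/α) ∫_0^α VaR_β(X) dβ`. -/
noncomputable def ES (P : Measure Ω) (α : ℝ) (X : Ω → ℝ) : ℝ :=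
  (1 / α) * ∫ β in Set.Ioo (0 : ℝ) α, VaR P β X

/-- `α* = inf {β ∈ (0,1) | VaR_β(∑ Xᵢ) ≤ ∑ VaR_α(Xᵢ)}`, with `inf ∅ = 1`. -/
noncomputable def alphaStarVaR (P : Measure Ω) (α : ℝ) {n : ℕ} (X : Fin n → Ω → ℝ) : ℝ :=
  sInf ({β ∈ Set.Ioo (0 : ℝ) 1 |
    VaR P β (fun ω => ∑ i, X i ω) ≤ ∑ i, VaR P α (X i)} ∪ {1})

/-- Diversification quotient based on VaR: `DQ^VaR_α(X) = α*/α`. -/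
noncomputable def DQVaR (P : Measure Ω) (α : ℝ) {n : ℕ} (X : Fin n → Ω → ℝ) : ℝ :=
  alphaStarVaR P α X / α

/-- `α* = inf {β ∈ (0,1) | ES_β(∑ Xᵢ) ≤ ∑ ES_α(Xᵢ)}`, with `inf ∅ = 1`. -/
noncomputable def alphaStarES (P : Measure Ω) (α : ℝ) {n : ℕ} (X : Fin n → Ω → ℝ) : ℝ :=
  sInf ({β ∈ Set.Ioo (0 : ℝ) 1 |
    ES P β (fun ω => ∑ i, X i ω) ≤ ∑ i, ES P α (X i)} ∪ {1})

/-- Diversification quotient based on ES: `DQ^ES_α(X) = α*/α`. -/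
noncomputable def DQES (P : Measure Ω) (α : ℝ) {n : ℕ} (X : Fin n → Ω → ℝ) : ℝ :=
  alphaStarES P α X / α

end DQ

/-! A random variable `S` with distribution function `F` satisfies `VaR_β(S) ≤ t ↔ 1 - β ≤ F(t)` for
`β ∈ (0,1)`: this is the Galois connection between `F` and its generalised inverse, and it rests on
the right-continuity of `F`. Hence the levels `β ∈ (0,1)` at which `VaR_β(S) ≤ t` are exactly those
with `1 - F(t) ≤ β`, and the infimum is `1 - F(t)` whatever the threshold `t`. -/

section Order

variable {ι κ : Type*} [Preorder κ]

theorem bddBelow_setOf_le_of_lt [LinearOrder ι] {F : ι → κ} (hF : Monotone F) {p : κ} {x : ι}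
    (hx : F x < p) : BddBelow {y | p ≤ F y} :=
  ⟨x, fun _ hy => (hF.reflect_lt (hx.trans_le hy)).le⟩

variable [ConditionallyCompleteLinearOrder ι] [DenselyOrdered ι]

theorem csInf_setOf_le_le_iff [NoMaxOrder ι] [TopologicalSpace ι] [OrderTopology ι]
    [TopologicalSpace κ] [ClosedIciTopology κ]
    {F : ι → κ} (hF : Monotone F) {p : κ} {t : ι} (hFt : ContinuousWithinAt F (Ioi t) t)
    (hne : {x | p ≤ F x}.Nonempty) (hbdd : BddBelow {x | p ≤ F x}) :
    sInf {x | p ≤ F x} ≤ t ↔ p ≤ F t := by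
  refine ⟨fun hle => ge_of_tendsto hFt ?_, csInf_le hbdd⟩
  filter_upwards [self_mem_nhdsWithin] with y hty
  obtain ⟨x, hpx, hxy⟩ := exists_lt_of_csInf_lt hne (hle.trans_lt hty)
  exact hpx.trans (hF hxy.le)

theorem csInf_sep_Ioo_le_union_singleton {a b q : ι} (hq : q ∈ Icc a b) :
    sInf ({x ∈ Ioo a b | q ≤ x} ∪ {b}) = q := by
  refine csInf_eq_of_forall_ge_of_forall_gt_exists_lt ⟨b, Or.inr rfl⟩ ?_ fun w hqw => ?_
  · rintro x (⟨-, hqx⟩ | rfl)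
    exacts [hqx, hq.2]
  · obtain hbw | hwb := lt_or_ge b w
    · exact ⟨b, Or.inr rfl, hbw⟩
    · obtain ⟨x, hqx, hxw⟩ := exists_between hqw
      exact ⟨x, Or.inl ⟨⟨hq.1.trans_lt hqx, hxw.trans_le hwb⟩, hqx.le⟩, hxw⟩

end Order

theorem csInf_setOf_le_cdf_le_iff (μ : Measure ℝ) {p : ℝ} (hp : p ∈ Ioo (0 : ℝ) 1) (t : ℝ) :
    sInf {x | p ≤ cdf μ x} ≤ t ↔ p ≤ cdf μ t := by
  obtain ⟨x, hx⟩ := ((tendsto_cdf_atTop μ).eventually_const_le hp.2).exists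
  obtain ⟨y, hy⟩ := ((tendsto_cdf_atBot μ).eventually_lt_const hp.1).exists
  exact csInf_setOf_le_le_iff (monotone_cdf μ)
    (((cdf μ).right_continuous t).mono Ioi_subset_Ici_self) ⟨x, hx⟩
    (bddBelow_setOf_le_of_lt (monotone_cdf μ) hy)

namespace DQ

variable {Ω : Type*} [MeasurableSpace Ω] (P : Measure Ω) [IsProbabilityMeasure P] {S : Ω → ℝ}

theorem cdf_map_eq_toReal (hS : AEMeasurable S P) (x : ℝ) :
    cdf (P.map S) x = (P {ω | S ω ≤ x}).toReal := by
  have := Measure.isProbabilityMeasure_map hS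
  rw [cdf_eq_real, map_measureReal_apply_of_aemeasurable hS measurableSet_Iic]
  rfl

theorem VaR_le_iff (hS : AEMeasurable S P) {β : ℝ} (hβ : β ∈ Ioo (0 : ℝ) 1) (t : ℝ) :
    VaR P β S ≤ t ↔ 1 - β ≤ (P {ω | S ω ≤ t}).toReal := by
  simpa only [VaR, cdf_map_eq_toReal P hS] using
    csInf_setOf_le_cdf_le_iff (P.map S) (Ioo.one_sub_mem hβ) t

end DQ

open DQ in
theorem stmt0_general {Ω : Type*} [MeasurableSpace Ω] (P : Measure Ω) [IsProbabilityMeasure P]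
    {S : Ω → ℝ} (hS : AEMeasurable S P) (t : ℝ) :
    sInf ({β ∈ Ioo (0 : ℝ) 1 | VaR P β S ≤ t} ∪ {1}) = 1 - (P {ω | S ω ≤ t}).toReal := by
  have hlevels : {β ∈ Ioo (0 : ℝ) 1 | VaR P β S ≤ t} =
      {β ∈ Ioo (0 : ℝ) 1 | 1 - (P {ω | S ω ≤ t}).toReal ≤ β} :=
    Set.sep_ext_iff.2 fun _ hβ => (VaR_le_iff P hS hβ t).trans sub_le_comm
  rw [hlevels]
  exact csInf_sep_Ioo_le_union_singleton
    ⟨sub_nonneg.2 measureReal_le_one, sub_le_self 1 ENNReal.toReal_nonneg⟩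

open DQ in
/-- For every n ≥ 1, every random vector X and every α ∈ (0,1),
DQ^VaR_α(X) = (1 − F(∑ᵢ VaR_α(Xᵢ)))/α, where F is the distribution function of
S = X₁ + ⋯ + Xₙ. -/
theorem stmt0 {Ω : Type*} [MeasurableSpace Ω] (P : Measure Ω) [IsProbabilityMeasure P]
    (hP : Atomless P) (n : ℕ) (hn : 1 ≤ n) (X : Fin n → Ω → ℝ)
    (hX : ∀ i, Measurable (X i)) (α : ℝ) (hα : α ∈ Set.Ioo (0 : ℝ) 1) :
    DQVaR P α X =
      (1 - (P {ω | (∑ i, X i ω) ≤ ∑ i, VaR P α (X i)}).toReal) / α := by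
  have hS : AEMeasurable (fun ω => ∑ i, X i ω) P :=
    (Finset.measurable_fun_sum _ fun i _ => hX i).aemeasurable
  exact congrArg (· / α) (stmt0_general P hS _)
end

section
/- For every n ≥ 2 and α ∈ (0,1), the set of values {DQ^VaR_α(X) : X a random vector of n real random variables on the given atomless probability space} is exactly the closed interval [0, min{n, 1/α}]. -/
open MeasureTheory ProbabilityTheory Filter Set

/-!
Since `VaR_β(S) ≤ v` says exactly that `P(S > v) ≤ β`, the number `α*` is the probability that
`∑ Xᵢ` exceeds `∑ VaR_α(Xᵢ)`. On this event some `Xᵢ` exceeds its own `VaR_α(Xᵢ)`, and each of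
these has probability at most `α`; the union bound gives `α* ≤ min (nα) 1`.

Conversely, by Sierpiński's theorem an atomless space carries disjoint events `Aᵢ` of equal
probability `dα / n ≤ α`. Their indicators have `VaR_α = 0`, so for them `α* = P(⋃ Aᵢ) = dα`.
-/

namespace DQ

section Sierpinski

/-- The Brezis–Browder ordering principle: each step of a greedy sequence gains at least half of
what can still be gained, so nothing can be gained beyond an upper bound of the sequence. -/
lemma exists_ge_forall_ge_apply_le {β : Type*} [Preorder β] {f : β → ℝ} (hf : Monotone f)
    (hbdd : BddAbove (range f)) (hseq : ∀ u : ℕ → β, Monotone u → BddAbove (range u)) (a : β) :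
    ∃ m, a ≤ m ∧ ∀ b, m ≤ b → f b ≤ f m := by
  have midpoint_step : ∀ x, ∃ y, x ≤ y ∧ ∀ b, x ≤ b → f b ≤ 2 * f y - f x := by
    intro x
    have le_sup : ∀ b, x ≤ b → f b ≤ sSup (f '' Ici x) := fun b hb =>
      le_csSup (hbdd.mono (image_subset_range _ _)) (mem_image_of_mem f hb)
    rcases (le_sup x le_rfl).eq_or_lt with hsup | hsup
    · exact ⟨x, le_rfl, fun b hb => by linarith [le_sup b hb]⟩
    · obtain ⟨-, ⟨y, hxy, rfl⟩, hy⟩ :=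
        exists_lt_of_lt_csSup (nonempty_Ici.image f) (add_div_two_lt_right.2 hsup)
      exact ⟨y, hxy, fun b hb => by linarith [le_sup b hb]⟩
  choose next le_next next_spec using midpoint_step
  let u : ℕ → β := fun k => next^[k] a
  have u_succ : ∀ k, u (k + 1) = next (u k) := fun k => Function.iterate_succ_apply' _ _ _
  have u_mono : Monotone u := monotone_nat_of_le_succ fun k => (u_succ k).symm ▸ le_next (u k)
  have u_tendsto : Tendsto (fun k => f (u k)) atTop (nhds (⨆ k, f (u k))) :=
    tendsto_atTop_ciSup (hf.comp u_mono) (hbdd.mono (range_comp_subset_range u f))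
  obtain ⟨m, hm⟩ := hseq u u_mono
  have u_le_m : ∀ k, u k ≤ m := fun k => hm (mem_range_self k)
  refine ⟨m, u_le_m 0, fun b hb => ?_⟩
  have f_b_le : ∀ k, f b ≤ 2 * f (u (k + 1)) - f (u k) := fun k =>
    (u_succ k).symm ▸ next_spec (u k) b ((u_le_m k).trans hb)
  have f_b_le_iSup := ge_of_tendsto'
    (((u_tendsto.comp (tendsto_add_atTop_nat 1)).const_mul 2).sub u_tendsto) f_b_le
  have iSup_le_f_m : ⨆ k, f (u k) ≤ f m := ciSup_le fun k => hf (u_le_m k)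
  linarith

variable {Ω : Type*} [MeasurableSpace Ω] {μ : Measure Ω} [IsFiniteMeasure μ] {A : Set Ω}

lemma Atomless.exists_subset_measureReal_le_half (hμ : Atomless μ) (hA : MeasurableSet A)
    (hA_pos : 0 < μ.real A) :
    ∃ B ⊆ A, MeasurableSet B ∧ 0 < μ.real B ∧ μ.real B ≤ μ.real A / 2 := by
  obtain ⟨B, hB, hBA, hB_pos, hB_lt⟩ := hμ A hA (ENNReal.toReal_pos_iff.1 hA_pos).1
  have hB_pos' : 0 < μ.real B := ENNReal.toReal_pos hB_pos.ne' (measure_ne_top _ _)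
  have hB_lt' : μ.real B < μ.real A :=
    ENNReal.toReal_strict_mono (measure_ne_top _ _) hB_lt
  have hdiff : μ.real (A \ B) = μ.real A - μ.real B := measureReal_sdiff hBA hB
  rcases le_total (μ.real B) (μ.real A / 2) with h | h
  · exact ⟨B, hBA, hB, hB_pos', h⟩
  · exact ⟨A \ B, sdiff_subset, hA.diff hB, by linarith, by linarith⟩

lemma Atomless.exists_subset_measureReal_lt (hμ : Atomless μ) (hA : MeasurableSet A)
    (hA_pos : 0 < μ.real A) {ε : ℝ} (hε : 0 < ε) :
    ∃ B ⊆ A, MeasurableSet B ∧ 0 < μ.real B ∧ μ.real B < ε := by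
  have iterated_halving : ∀ k : ℕ, ∃ B ⊆ A, MeasurableSet B ∧ 0 < μ.real B ∧
      μ.real B ≤ μ.real A * (1 / 2) ^ k := by
    intro k
    induction k with
    | zero => exact ⟨A, subset_rfl, hA, hA_pos, by simp⟩
    | succ k ih =>
      obtain ⟨B, hBA, hB, hB_pos, hB_le⟩ := ih
      obtain ⟨C, hCB, hC, hC_pos, hC_le⟩ := hμ.exists_subset_measureReal_le_half hB hB_pos
      exact ⟨C, hCB.trans hBA, hC, hC_pos, by rw [pow_succ]; linarith⟩
  obtain ⟨k, hk⟩ := exists_pow_lt_of_lt_one (div_pos hε hA_pos) (one_half_lt_one (α := ℝ))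
  obtain ⟨B, hBA, hB, hB_pos, hB_le⟩ := iterated_halving k
  exact ⟨B, hBA, hB, hB_pos, hB_le.trans_lt ((lt_div_iff₀' hA_pos).1 hk)⟩

/-- Sierpiński's theorem: a maximal subset of measure at most `t` has measure exactly `t`, since
otherwise a small enough piece of its complement could be added. -/
theorem Atomless.exists_subset_measureReal_eq (hμ : Atomless μ) (hA : MeasurableSet A) {t : ℝ}
    (ht₀ : 0 ≤ t) (ht : t ≤ μ.real A) : ∃ B ⊆ A, MeasurableSet B ∧ μ.real B = t := by
  let Candidate := {B : Set Ω // B ⊆ A ∧ MeasurableSet B ∧ μ.real B ≤ t}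
  have iUnion_le : ∀ u : ℕ → Candidate, Monotone u → μ.real (⋃ k, (u k).1) ≤ t := fun u hu =>
    le_of_tendsto' ((ENNReal.tendsto_toReal (measure_ne_top _ _)).comp
      (tendsto_measure_iUnion_atTop hu)) fun k => (u k).2.2.2
  obtain ⟨⟨B, hBA, hB, hB_le⟩, -, hB_max⟩ :=
    exists_ge_forall_ge_apply_le (f := fun B : Candidate => μ.real B.1)
      (fun _ _ h => measureReal_mono h) ⟨t, by rintro - ⟨B, rfl⟩; exact B.2.2.2⟩
      (fun u hu => ⟨⟨⋃ k, (u k).1, iUnion_subset fun k => (u k).2.1,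
        .iUnion fun k => (u k).2.2.1, iUnion_le u hu⟩,
        by rintro - ⟨k, rfl⟩; exact subset_iUnion (fun k => (u k).1) k⟩)
      ⟨∅, empty_subset A, .empty, by simpa using ht₀⟩
  refine ⟨B, hBA, hB, hB_le.eq_of_not_lt fun hB_lt => ?_⟩
  have hdiff : μ.real (A \ B) = μ.real A - μ.real B := measureReal_sdiff hBA hB
  obtain ⟨C, hC_sub, hC, hC_pos, hC_lt⟩ := hμ.exists_subset_measureReal_lt (hA.diff hB)
    (by linarith) (sub_pos.2 hB_lt)
  have hunion : μ.real (B ∪ C) = μ.real B + μ.real C :=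
    measureReal_union (disjoint_sdiff_right.mono_right hC_sub) hC
  have hunion_le : μ.real (B ∪ C) ≤ μ.real B :=
    hB_max ⟨B ∪ C, union_subset hBA (hC_sub.trans sdiff_subset), hB.union hC, by linarith⟩
      subset_union_left
  linarith

lemma Atomless.exists_pairwiseDisjoint_measureReal_eq (hμ : Atomless μ) {ι : Type*}
    (s : Finset ι) (w : ι → ℝ) (hw : ∀ i ∈ s, 0 ≤ w i) (hsum : ∑ i ∈ s, w i ≤ μ.real univ) :
    ∃ B : ι → Set Ω, (s : Set ι).PairwiseDisjoint B ∧
      ∀ i ∈ s, MeasurableSet (B i) ∧ μ.real (B i) = w i := by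
  classical
  induction s using Finset.induction_on with
  | empty => exact ⟨fun _ => ∅, by simp⟩
  | insert j s hj ih =>
    rw [Finset.forall_mem_insert] at hw
    rw [Finset.sum_insert hj] at hsum
    obtain ⟨B, hB_disj, hB⟩ := ih hw.2 (by linarith)
    have hU : MeasurableSet (⋃ i ∈ s, B i) := s.measurableSet_biUnion fun i hi => (hB i hi).1
    have hU_real : μ.real (⋃ i ∈ s, B i) = ∑ i ∈ s, w i :=
      (measureReal_biUnion_finset hB_disj fun i hi => (hB i hi).1).trans
        (Finset.sum_congr rfl fun i hi => (hB i hi).2)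
    obtain ⟨C, hC_sub, hC, hC_real⟩ := hμ.exists_subset_measureReal_eq hU.compl hw.1
      (by rw [measureReal_compl hU, hU_real]; linarith)
    have update_of_mem : ∀ i ∈ s, Function.update B j C i = B i := fun i hi =>
      Function.update_of_ne (ne_of_mem_of_not_mem hi hj) _ _
    refine ⟨Function.update B j C, ?_, ?_⟩
    · rw [Finset.coe_insert, pairwiseDisjoint_insert_of_notMem (by exact_mod_cast hj)]
      refine ⟨fun i hi k hk hik => ?_, fun i hi => ?_⟩
      · simpa only [Function.onFun, update_of_mem i hi, update_of_mem k hk] using hB_disj hi hk hik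
      · rw [Function.update_self, update_of_mem i hi]
        exact (disjoint_compl_left.mono_left hC_sub).mono_right (subset_biUnion_of_mem (u := B) hi)
    · rw [Finset.forall_mem_insert, Function.update_self]
      exact ⟨⟨hC, hC_real⟩, fun i hi => by rw [update_of_mem i hi]; exact hB i hi⟩

end Sierpinski

section ValueAtRisk

lemma sInf_setOf_le_cdf_le_iff (ν : Measure ℝ) {p : ℝ} (hp : p ∈ Ioo (0 : ℝ) 1) {v : ℝ} :
    sInf {x | p ≤ cdf ν x} ≤ v ↔ p ≤ cdf ν v := by
  have hne : {x | p ≤ cdf ν x}.Nonempty :=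
    ((tendsto_cdf_atTop ν).eventually (eventually_ge_nhds hp.2)).exists
  have hbdd : BddBelow {x | p ≤ cdf ν x} := by
    obtain ⟨b, hb⟩ := ((tendsto_cdf_atBot ν).eventually (eventually_lt_nhds hp.1)).exists
    exact ⟨b, fun x hx => (monotone_cdf ν).reflect_lt (hb.trans_le hx) |>.le⟩
  refine ⟨fun h => ?_, fun h => csInf_le hbdd h⟩
  have le_cdf_of_gt : ∀ y ∈ Ioi v, p ≤ cdf ν y := fun y hy =>
    let ⟨_, hx, hxy⟩ := exists_lt_of_csInf_lt hne (h.trans_lt hy)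
    hx.trans (monotone_cdf ν hxy.le)
  exact ge_of_tendsto (((cdf ν).right_continuous v).mono_left
    (nhdsWithin_mono v Ioi_subset_Ici_self)) (eventually_nhdsWithin_of_forall le_cdf_of_gt)

variable {Ω : Type*} [MeasurableSpace Ω] {P : Measure Ω} {α : ℝ} {X : Ω → ℝ}

lemma VaR_nonneg (hα : α < 1) (hX : 0 ≤ᵐ[P] X) : 0 ≤ VaR P α X := by
  refine Real.sInf_nonneg fun x hx => not_lt.1 fun hx_neg => ?_
  have hnull : P {ω | X ω ≤ x} = 0 := by
    rw [measure_eq_zero_iff_ae_notMem]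
    filter_upwards [hX] with ω hω
    exact not_le.2 (hx_neg.trans_le hω)
  rw [mem_ofPred_eq, hnull, ENNReal.toReal_zero] at hx
  linarith

variable [IsProbabilityMeasure P]

lemma VaR_le_iff_s1 (hα : α ∈ Ioo (0 : ℝ) 1) (hX : AEMeasurable X P) {v : ℝ} :
    VaR P α X ≤ v ↔ P.real {ω | v < X ω} ≤ α := by
  have : IsProbabilityMeasure (P.map X) := Measure.isProbabilityMeasure_map hX
  have cdf_map : ∀ x, (P {ω | X ω ≤ x}).toReal = cdf (P.map X) x := fun x => by
    rw [cdf_eq_real, measureReal_def, Measure.map_apply_of_aemeasurable hX measurableSet_Iic]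
    rfl
  have tail : P.real {ω | v < X ω} = 1 - cdf (P.map X) v := by
    rw [← cdf_map, ← measureReal_def,
      ← probReal_compl_eq_one_sub₀ (nullMeasurableSet_le hX aemeasurable_const)]
    simp only [compl_ofPred, not_le]
  simp only [VaR, cdf_map]
  rw [sInf_setOf_le_cdf_le_iff _ ⟨sub_pos.2 hα.2, sub_lt_self 1 hα.1⟩, tail, sub_le_comm]

lemma VaR_indicator_one_eq_zero (hα : α ∈ Ioo (0 : ℝ) 1) {A : Set Ω} (hA : MeasurableSet A)
    (hA_le : P.real A ≤ α) : VaR P α (A.indicator 1) = 0 := by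
  refine le_antisymm ?_ (VaR_nonneg hα.2 (.of_forall (indicator_nonneg fun _ _ => zero_le_one)))
  rw [VaR_le_iff_s1 hα (measurable_one.indicator hA).aemeasurable]
  have hset : {ω | 0 < A.indicator (1 : Ω → ℝ) ω} = A := by
    ext ω; by_cases h : ω ∈ A <;> simp [h]
  rwa [hset]

end ValueAtRisk

section DiversificationQuotient

lemma sInf_setOf_le_union_one {t : ℝ} (ht : t ∈ Icc (0 : ℝ) 1) :
    sInf ({β ∈ Ioo (0 : ℝ) 1 | t ≤ β} ∪ {1}) = t := by
  refine IsGLB.csInf_eq ⟨?_, fun b hb => ?_⟩ ⟨1, Or.inr rfl⟩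
  · rintro β (⟨-, h⟩ | rfl)
    exacts [h, ht.2]
  · refine le_of_forall_gt_imp_ge_of_dense fun β hβ => ?_
    rcases lt_or_ge β 1 with h | h
    · exact hb (Or.inl ⟨⟨ht.1.trans_lt hβ, h⟩, hβ.le⟩)
    · exact (hb (Or.inr rfl)).trans h

variable {Ω : Type*} [MeasurableSpace Ω] {P : Measure Ω} [IsProbabilityMeasure P] {α : ℝ} {n : ℕ}
  {X : Fin n → Ω → ℝ}

lemma alphaStarVaR_eq_measureReal (hX : ∀ i, AEMeasurable (X i) P) :
    alphaStarVaR P α X = P.real {ω | ∑ i, VaR P α (X i) < ∑ i, X i ω} := by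
  have hsum : AEMeasurable (fun ω => ∑ i, X i ω) P :=
    Finset.aemeasurable_fun_sum _ fun i _ => hX i
  rw [alphaStarVaR, ← sInf_setOf_le_union_one ⟨measureReal_nonneg, measureReal_le_one⟩]
  congr 2
  ext β
  exact and_congr_right fun hβ => VaR_le_iff_s1 hβ hsum

lemma alphaStarVaR_le_mul (hα : α ∈ Ioo (0 : ℝ) 1) (hX : ∀ i, AEMeasurable (X i) P) :
    alphaStarVaR P α X ≤ n * α := by
  have some_exceeds : {ω | ∑ i, VaR P α (X i) < ∑ i, X i ω} ⊆
      ⋃ i, {ω | VaR P α (X i) < X i ω} := by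
    intro ω (hω : ∑ i, VaR P α (X i) < ∑ i, X i ω)
    obtain ⟨i, -, hi⟩ := Finset.exists_lt_of_sum_lt hω
    exact mem_iUnion.2 ⟨i, hi⟩
  calc alphaStarVaR P α X
      = P.real {ω | ∑ i, VaR P α (X i) < ∑ i, X i ω} := alphaStarVaR_eq_measureReal hX
    _ ≤ P.real (⋃ i, {ω | VaR P α (X i) < X i ω}) := measureReal_mono some_exceeds
    _ ≤ ∑ i, P.real {ω | VaR P α (X i) < X i ω} := measureReal_iUnion_fintype_le _
    _ ≤ ∑ _i : Fin n, α := Finset.sum_le_sum fun i _ => (VaR_le_iff_s1 hα (hX i)).1 le_rfl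
    _ = n * α := by simp

lemma DQVaR_mem_Icc (hα : α ∈ Ioo (0 : ℝ) 1) (hX : ∀ i, AEMeasurable (X i) P) :
    DQVaR P α X ∈ Icc 0 (min (n : ℝ) (1 / α)) := by
  refine ⟨?_, le_min ((div_le_iff₀ hα.1).2 (alphaStarVaR_le_mul hα hX)) ?_⟩ <;>
    rw [DQVaR, alphaStarVaR_eq_measureReal hX]
  · exact div_nonneg measureReal_nonneg hα.1.le
  · exact div_le_div_of_nonneg_right measureReal_le_one hα.1.le

lemma DQVaR_indicator_one (hα : α ∈ Ioo (0 : ℝ) 1) {A : Fin n → Set Ω}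
    (hA : ∀ i, MeasurableSet (A i)) (hA_le : ∀ i, P.real (A i) ≤ α) :
    DQVaR P α (fun i => (A i).indicator 1) = P.real (⋃ i, A i) / α := by
  rw [DQVaR, alphaStarVaR_eq_measureReal fun i => (measurable_one.indicator (hA i)).aemeasurable]
  simp only [VaR_indicator_one_eq_zero hα (hA _) (hA_le _), Finset.sum_const_zero]
  congr 2
  ext ω
  have indicator_nonneg : ∀ i ∈ Finset.univ, 0 ≤ (A i).indicator (1 : Ω → ℝ) ω :=
    fun i _ => Set.indicator_nonneg (fun _ _ => zero_le_one) ω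
  rw [mem_ofPred_eq, Finset.sum_pos_iff_of_nonneg indicator_nonneg, mem_iUnion]
  refine exists_congr fun i => ?_
  by_cases h : ω ∈ A i <;> simp [h]

lemma Atomless.exists_DQVaR_eq_sum_div (hP : Atomless P) (hα : α ∈ Ioo (0 : ℝ) 1) {w : Fin n → ℝ}
    (hw : ∀ i, w i ∈ Icc 0 α) (hsum : ∑ i, w i ≤ 1) :
    ∃ X : Fin n → Ω → ℝ, (∀ i, Measurable (X i)) ∧ DQVaR P α X = (∑ i, w i) / α := by
  obtain ⟨A, hA_disj, hA⟩ := hP.exists_pairwiseDisjoint_measureReal_eq Finset.univ w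
    (fun i _ => (hw i).1) (by rwa [probReal_univ])
  simp only [Finset.mem_univ, forall_true_left, forall_and] at hA
  obtain ⟨hA_meas, hA_real⟩ := hA
  refine ⟨fun i => (A i).indicator 1, fun i => measurable_one.indicator (hA_meas i), ?_⟩
  rw [DQVaR_indicator_one hα hA_meas fun i => (hA_real i).trans_le (hw i).2,
    measureReal_iUnion_fintype (fun i j hij => hA_disj (by simp) (by simp) hij) hA_meas]
  simp only [hA_real]

end DiversificationQuotient

end DQ

open DQ in
/-- For every n ≥ 2 and α ∈ (0,1), the set of values attained by DQ^VaR_α over all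
random vectors of n real random variables is exactly [0, min{n, 1/α}]. -/
theorem stmt1 {Ω : Type*} [MeasurableSpace Ω] (P : Measure Ω) [IsProbabilityMeasure P]
    (hP : Atomless P) (n : ℕ) (hn : 2 ≤ n) (α : ℝ) (hα : α ∈ Set.Ioo (0 : ℝ) 1) :
    {d : ℝ | ∃ X : Fin n → Ω → ℝ, (∀ i, Measurable (X i)) ∧ DQVaR P α X = d}
      = Set.Icc 0 (min (n : ℝ) (1 / α)) := by
  refine Subset.antisymm ?_ ?_
  · rintro _ ⟨X, hX, rfl⟩
    exact DQVaR_mem_Icc hα fun i => (hX i).aemeasurable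
  · rintro d ⟨hd_nonneg, hd_le⟩
    obtain ⟨hd_le_n, hd_le_inv⟩ := le_min_iff.1 hd_le
    have hα_pos : 0 < α := hα.1
    have hn_pos : (0 : ℝ) < n := by exact_mod_cast two_pos.trans_le hn
    have weight_le : d * α / n ≤ α := by
      rw [div_le_iff₀ hn_pos, mul_comm α]
      gcongr
    have sum_weights : ∑ _i : Fin n, d * α / n = d * α := by
      simp [mul_div_cancel₀ _ hn_pos.ne']
    obtain ⟨X, hX, hDQ⟩ := hP.exists_DQVaR_eq_sum_div hα
      (w := fun _ => d * α / n) (fun _ => ⟨by positivity, weight_le⟩)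
      (sum_weights.trans_le ((le_div_iff₀ hα_pos).1 hd_le_inv))
    exact ⟨X, hX, by rw [hDQ, sum_weights, mul_div_cancel_right₀ _ hα_pos.ne']⟩
end
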